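/- Let μ > 0 and let f be a classical solution of the BDY PDE on [0,∞) × [0,∞) which is strictly positive, is for each t a probability density with mean μ, and is such that f ln f and (∂_v f)²/f are integrable on (0,∞) for each t, with ∂_v f(v,t) ln f(v,t) → 0 and f(v,t) ln f(v,t) → 0 as v → ∞, and such that the relative entropy H[f|f∞](t) is differentiable in t with derivative obtained by differentiating under the integral sign. Then for all t ≥ 0: d/dt H[f|f∞](t) = − D[f](t), where D[f](t) = ∫₀^∞ ( ∂_v f(v,t) + f(0,t) f(v,t) )² / f(v,t) dv ≥ 0. In particular, the relative entropy with respect to the Boltzmann–Gibbs equilibrium decreases monotonically in time. -/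

import Mathlib

open MeasureTheory Set Filter

lemma bdy_M_integral (μ : ℝ) (hμ : 0 < μ) :
    IntegrableOn (fun v : ℝ => (1 / μ) * Real.exp (-v / μ)) (Ioi 0) ∧
    ∫ v in Ioi (0:ℝ), (1 / μ) * Real.exp (-v / μ) = 1 := by
  have e : (fun v : ℝ => (1 / μ) * Real.exp (-v / μ)) = fun v => (1/μ) * Real.exp ((-(1/μ)) * v) := by
    funext v; congr 2; ring
  rw [e]
  have h : -(1/μ) < 0 := by have := one_div_pos.2 hμ; linarith
  refine ⟨(integrableOn_exp_mul_Ioi h 0).const_mul _, ?_⟩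
  rw [integral_const_mul, integral_exp_mul_Ioi h 0]
  simp; field_simp

lemma bdy_log_eq (μ : ℝ) (hμ : 0 < μ) (x v : ℝ) (hx : 0 < x) :
    Real.log (x / ((1 / μ) * Real.exp (-v / μ))) = Real.log x + Real.log μ + v / μ := by
  rw [Real.log_div hx.ne' (by positivity), Real.log_mul (by positivity) (by positivity),
    Real.log_exp, one_div, Real.log_inv]
  ring

lemma bdy_abs_le (x m : ℝ) (hx : 0 < x) (hm : 0 < m) :
    |x * Real.log (x / m)| ≤ x * Real.log (x / m) + 2 * m := by
  have h1 : Real.log (m / x) ≤ m / x - 1 := Real.log_le_sub_one_of_pos (by positivity)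
  have h2 : Real.log (m / x) = - Real.log (x / m) := by rw [← Real.log_inv, inv_div]
  have h3 : x * (m / x) = m := by field_simp
  rw [abs_le]; constructor <;> nlinarith

set_option maxHeartbeats 1600000 in
/-- the time-frozen estimate -/
lemma bdy_key (μ : ℝ) (hμ : 0 < μ) (F F1 F2 : ℝ → ℝ)
    (hF : ∀ v, 0 ≤ v → HasDerivAt F (F1 v) v)
    (hF1 : ∀ v, 0 ≤ v → HasDerivAt F1 (F2 v) v)
    (hpos : ∀ v, 0 ≤ v → 0 < F v)
    (hint : IntegrableOn F (Ioi 0))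
    (hint2 : IntegrableOn F2 (Ioi 0))
    (hintv : IntegrableOn (fun v => v * F v) (Ioi 0))
    (hmass : ∫ v in Ioi (0:ℝ), F v = 1)
    (hmean : ∫ v in Ioi (0:ℝ), v * F v = μ)
    (hBC : F1 0 + (F 0) ^ 2 = 0)
    (hlog : IntegrableOn (fun v => F v * Real.log (F v / ((1 / μ) * Real.exp (-v / μ)))) (Ioi 0))
    (R : ℝ) (hR : 1 ≤ R) :
    |(∫ v in (0:ℝ)..R, (1 - v / R) ^ 2 *
        ((F2 v + F 0 * F1 v) * (Real.log (F v / ((1 / μ) * Real.exp (-v / μ))) + 1)))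
      + ∫ v in (0:ℝ)..R, (1 - v / R) ^ 2 * ((F1 v + F 0 * F v) ^ 2 / F v)| ≤
    (2 * F 0 * |Real.log (F 0) + Real.log μ| + |1 / μ - F 0| * F 0 * (2 * μ)
      + (2 * F 0 + 2) * ((∫ v in Ioi (0:ℝ), F v * Real.log (F v / ((1 / μ) * Real.exp (-v / μ)))) + 3)
      + (2 + 2 * |2 / μ - F 0|)) / R := by
  have hR0 : 0 < R := by linarith
  set a := F 0 with ha
  have ha0 : 0 < a := hpos 0 le_rfl
  set L : ℝ → ℝ := fun v => Real.log (F v) + Real.log μ + v / μ + 1 with hL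
  have hLeq : ∀ v, 0 ≤ v → Real.log (F v / ((1 / μ) * Real.exp (-v / μ))) + 1 = L v := fun v hv => by
    rw [bdy_log_eq μ hμ _ _ (hpos v hv)]
  have hLd : ∀ v, 0 ≤ v → HasDerivAt L (F1 v / F v + 1 / μ) v := fun v hv =>
    ((((hF v hv).log (hpos v hv).ne').add_const _).add ((hasDerivAt_id v).div_const μ)).add_const _
  have hmem : ∀ v ∈ uIcc 0 R, 0 ≤ v ∧ v ≤ R := fun v hv => by
    rw [uIcc_of_le hR0.le] at hv; exact hv
  have cF : ContinuousOn F (uIcc 0 R) := fun v hv => (hF v (hmem v hv).1).continuousAt.continuousWithinAt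
  have cF1 : ContinuousOn F1 (uIcc 0 R) := fun v hv => (hF1 v (hmem v hv).1).continuousAt.continuousWithinAt
  have cL : ContinuousOn L (uIcc 0 R) := fun v hv => (hLd v (hmem v hv).1).continuousAt.continuousWithinAt
  have cX : ContinuousOn (fun v : ℝ => 1 - v / R) (uIcc 0 R) := by fun_prop
  have hne : ∀ v ∈ uIcc 0 R, F v ≠ 0 := fun v hv => (hpos v (hmem v hv).1).ne'
  have iF2 : IntervalIntegrable F2 volume 0 R := by
    rw [intervalIntegrable_iff_integrableOn_Ioc_of_le hR0.le]
    exact hint2.mono_set Ioc_subset_Ioi_self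
  -- pieces
  set P : ℝ → ℝ := fun v => (1 - v / R) ^ 2 * ((F2 v + a * F1 v) * L v) with hP
  set Q : ℝ → ℝ := fun v => (1 - v / R) ^ 2 * ((F1 v + a * F v) ^ 2 / F v) with hQ
  set E1 : ℝ → ℝ := fun v => (1 - v / R) ^ 2 * F v with hE1
  set W : ℝ → ℝ := fun v => (a * (-(2 / R) * (1 - v / R)) - 2 / R ^ 2) * (F v * L v)
      + (2 / R ^ 2 - (2 / μ - a) * (-(2 / R) * (1 - v / R))) * F v with hW
  set T : ℝ → ℝ := fun v => (1 - v / R) ^ 2 * ((F1 v + a * F v) * L v)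
    - (-(2 / R) * (1 - v / R)) * (F v * L v) + (-(2 / R) * (1 - v / R)) * F v
    - (1 / μ - a) * ((1 - v / R) ^ 2 * F v) with hT
  have iP : IntervalIntegrable P volume 0 R := by
    have : IntervalIntegrable (fun v => F2 v + a * F1 v) volume 0 R :=
      iF2.add ((cF1.const_smul a).intervalIntegrable)
    exact (this.mul_continuousOn cL).continuousOn_mul (cX.pow 2)
  have iQ : IntervalIntegrable Q volume 0 R :=
    ((cX.pow 2).mul (((cF1.add (cF.const_smul a)).pow 2).div cF hne)).intervalIntegrable
  have cE1 : ContinuousOn E1 (uIcc 0 R) := (cX.pow 2).mul cF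
  have iE1 : IntervalIntegrable E1 volume 0 R := cE1.intervalIntegrable
  have cW : ContinuousOn W (uIcc 0 R) := by
    apply ContinuousOn.add
    · exact ContinuousOn.mul (by fun_prop) (cF.mul cL)
    · exact ContinuousOn.mul (by fun_prop) cF
  have iW : IntervalIntegrable W volume 0 R := cW.intervalIntegrable
  have hTd : ∀ v ∈ uIcc 0 R, HasDerivAt T (P v + Q v + (1 / μ - a) * a * E1 v + W v) v := by
    intro v hv
    have h0 := (hmem v hv).1
    have hFv := (hpos v h0).ne'
    have dX : HasDerivAt (fun v : ℝ => 1 - v / R) (-(1 / R)) v := by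
      simpa using ((hasDerivAt_id v).div_const R).const_sub 1
    have dX2 := dX.pow 2
    have dX1 := dX.const_mul (-(2 / R))
    have dg := (hF1 v h0).add ((hF v h0).const_mul a)
    have dFL := (hF v h0).mul (hLd v h0)
    have := (((dX2.mul (dg.mul (hLd v h0))).sub (dX1.mul dFL)).add (dX1.mul (hF v h0))).sub
      ((dX2.mul (hF v h0)).const_mul (1 / μ - a))
    refine HasDerivAt.congr_deriv (f := T) this ?_
    simp only [P, Q, E1, W, Pi.add_apply, Pi.mul_apply, Pi.pow_apply, show (2 - 1 : ℕ) = 1 from rfl, pow_one,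
      Nat.cast_ofNat]
    field_simp
    ring
  have hFTC := intervalIntegral.integral_eq_sub_of_hasDerivAt hTd
    (((iP.add iQ).add (iE1.const_mul _)).add iW)
  rw [intervalIntegral.integral_add ((iP.add iQ).add (iE1.const_mul _)) iW,
    intervalIntegral.integral_add (iP.add iQ) (iE1.const_mul _),
    intervalIntegral.integral_add iP iQ, intervalIntegral.integral_const_mul] at hFTC
  have hTR : T R = 0 := by simp [hT, hR0.ne']
  have hT0 : T 0 = (2 / R) * (a * (L 0 - 1)) - (1 / μ - a) * a := by
    have h1 : F1 0 = - a ^ 2 := by linarith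
    simp only [T, zero_div, h1, ← ha]; ring
  have hPeq : (∫ v in (0:ℝ)..R, (1 - v / R) ^ 2 *
        ((F2 v + a * F1 v) * (Real.log (F v / ((1 / μ) * Real.exp (-v / μ))) + 1))) = ∫ v in (0:ℝ)..R, P v := by
    apply intervalIntegral.integral_congr
    intro v hv
    simp only [hP]; rw [hLeq v (hmem v hv).1]
  rw [hPeq]
  have hsum : (∫ v in (0:ℝ)..R, P v) + ∫ v in (0:ℝ)..R, Q v =
      -((2 / R) * (a * (L 0 - 1))) + (1 / μ - a) * a * (1 - ∫ v in (0:ℝ)..R, E1 v) - ∫ v in (0:ℝ)..R, W v := by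
    rw [hTR, hT0] at hFTC; linarith
  rw [hsum]
  -- bounds
  have iF : IntervalIntegrable F volume 0 R := cF.intervalIntegrable
  have hFle : ∫ v in (0:ℝ)..R, F v ≤ 1 := by
    rw [intervalIntegral.integral_of_le hR0.le, ← hmass]
    exact setIntegral_mono_set hint (by
      filter_upwards [ae_restrict_mem measurableSet_Ioi] with v hv using (hpos v (le_of_lt hv)).le)
      Ioc_subset_Ioi_self.eventuallyLE
  have hE1le : ∫ v in (0:ℝ)..R, E1 v ≤ 1 := by
    refine le_trans (intervalIntegral.integral_mono_on hR0.le iE1 iF ?_) hFle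
    intro v hv
    have h1 : v / R ≤ 1 := by rw [div_le_one hR0]; exact hv.2
    have h2 : 0 ≤ v / R := div_nonneg hv.1 hR0.le
    have h3 : (1 - v / R) ^ 2 ≤ 1 := pow_le_one₀ (by linarith) (by linarith)
    exact mul_le_of_le_one_left (hpos v hv.1).le h3
  have hE1ge : 1 - 2 * μ / R ≤ ∫ v in (0:ℝ)..R, E1 v := by
    have i1 : IntegrableOn (fun v => F v - (2 / R) * (v * F v)) (Ioi 0) := hint.sub (hintv.const_mul _)
    have e1 : ∫ v in Ioi (0:ℝ), (F v - (2 / R) * (v * F v)) = 1 - 2 * μ / R := by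
      rw [integral_sub hint (hintv.const_mul _), integral_const_mul, hmass, hmean]; ring
    have e2 := setIntegral_union (f := fun v => F v - (2 / R) * (v * F v)) (μ := volume)
      (Ioc_disjoint_Ioi (le_refl R) : Disjoint (Ioc 0 R) (Ioi R)) measurableSet_Ioi
      (i1.mono_set Ioc_subset_Ioi_self) (i1.mono_set (Ioi_subset_Ioi hR0.le))
    rw [Ioc_union_Ioi_eq_Ioi hR0.le, e1] at e2
    have e3 : ∫ v in Ioi R, (F v - (2 / R) * (v * F v)) ≤ 0 := by
      apply setIntegral_nonpos measurableSet_Ioi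
      intro v hv
      have hv : R < v := hv
      have := hpos v (by linarith)
      have h1 : 1 ≤ v / R := by rw [one_le_div hR0]; exact hv.le
      have : F v - (2 / R) * (v * F v) = F v * (1 - 2 * (v / R)) := by ring
      rw [this]; nlinarith
    have e4 : ∫ v in Ioc 0 R, (F v - (2 / R) * (v * F v)) ≤ ∫ v in (0:ℝ)..R, E1 v := by
      rw [intervalIntegral.integral_of_le hR0.le]
      apply setIntegral_mono_on (i1.mono_set Ioc_subset_Ioi_self) iE1.1 measurableSet_Ioc
      intro v hv
      have := hpos v hv.1.le
      have : E1 v = F v - (2 / R) * (v * F v) + (v / R) ^ 2 * F v := by simp only [hE1]; ring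
      rw [this]
      have : 0 ≤ (v / R) ^ 2 * F v := by positivity
      linarith
    linarith
  obtain ⟨iM, eM⟩ := bdy_M_integral μ hμ
  set M : ℝ → ℝ := fun v => (1 / μ) * Real.exp (-v / μ) with hM
  set H := ∫ v in Ioi (0:ℝ), F v * Real.log (F v / ((1 / μ) * Real.exp (-v / μ))) with hH
  have hMpos : ∀ v, 0 < M v := fun v => by simp only [hM]; positivity
  have hFLabs : ∫ v in (0:ℝ)..R, |F v * L v| ≤ H + 3 := by
    have i2 : IntegrableOn (fun v => F v * Real.log (F v / M v) + 2 * M v + F v) (Ioi 0) :=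
      (hlog.add (iM.const_mul 2)).add hint
    have i3 : IntegrableOn (fun v => F v * Real.log (F v / M v) + 2 * M v) (Ioi 0) :=
      (hlog.add (iM.const_mul 2))
    have e2 : ∫ v in Ioi (0:ℝ), (F v * Real.log (F v / M v) + 2 * M v + F v) = H + 3 := by
      rw [integral_add i3 hint, integral_add hlog (iM.const_mul 2),
        integral_const_mul, eM, hmass]; ring
    have hb : ∀ v, 0 ≤ v → |F v * L v| ≤ F v * Real.log (F v / M v) + 2 * M v + F v := by
      intro v hv
      rw [← hLeq v hv, mul_add, mul_one]
      refine (abs_add_le _ _).trans ?_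
      rw [abs_of_pos (hpos v hv)]
      have := bdy_abs_le (F v) (M v) (hpos v hv) (hMpos v)
      linarith
    rw [← e2, intervalIntegral.integral_of_le hR0.le]
    refine le_trans (setIntegral_mono_on (cF.mul cL).abs.intervalIntegrable.1
      (i2.mono_set Ioc_subset_Ioi_self) measurableSet_Ioc (fun v hv => hb v hv.1.le)) ?_
    exact setIntegral_mono_set i2 (by
      filter_upwards [ae_restrict_mem measurableSet_Ioi] with v hv using
        (abs_nonneg _).trans (hb v (le_of_lt hv)))
      Ioc_subset_Ioi_self.eventuallyLE
  have hWle : |∫ v in (0:ℝ)..R, W v| ≤ ((2 * a + 2) * (H + 3) + (2 + 2 * |2 / μ - a|)) / R := by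
    have iFL : IntervalIntegrable (fun v => |F v * L v|) volume 0 R :=
      (cF.mul cL).abs.intervalIntegrable
    have h1 : |∫ v in (0:ℝ)..R, W v| ≤ ∫ v in (0:ℝ)..R,
        (((2 * a + 2) / R) * |F v * L v| + ((2 + 2 * |2 / μ - a|) / R) * F v) := by
      refine (intervalIntegral.abs_integral_le_integral_abs hR0.le).trans ?_
      refine intervalIntegral.integral_mono_on hR0.le cW.abs.intervalIntegrable
        ((iFL.const_mul _).add (iF.const_mul _)) ?_
      intro v hv
      have h1 : v / R ≤ 1 := by rw [div_le_one hR0]; exact hv.2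
      have h2 : 0 ≤ v / R := div_nonneg hv.1 hR0.le
      have hRR : 2 / R ^ 2 ≤ 2 / R := by
        apply div_le_div_of_nonneg_left <;> nlinarith
      have hRp : 0 ≤ 2 / R ^ 2 := by positivity
      have hx : |(-(2 / R) * (1 - v / R))| ≤ 2 / R := by
        rw [abs_mul, abs_neg, abs_of_pos (by positivity : 0 < 2 / R), abs_of_nonneg (by linarith : 0 ≤ 1 - v / R)]
        have : 0 < 2 / R := by positivity
        nlinarith
      simp only [hW]
      refine (abs_add_le _ _).trans ?_
      rw [abs_mul _ (F v * L v), abs_mul _ (F v), abs_of_pos (hpos v hv.1)]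
      gcongr
      · refine (abs_sub _ _).trans ?_
        rw [abs_mul, abs_of_pos ha0, abs_of_nonneg hRp]
        have : (2 * a + 2) / R = a * (2 / R) + 2 / R := by ring
        rw [this]; gcongr
      · exact (hpos v hv.1).le
      · refine (abs_sub _ _).trans ?_
        rw [abs_mul, abs_of_nonneg hRp]
        have : (2 + 2 * |2 / μ - a|) / R = 2 / R + |2 / μ - a| * (2 / R) := by ring
        rw [this]; gcongr
    rw [intervalIntegral.integral_add (iFL.const_mul _) (iF.const_mul _),
      intervalIntegral.integral_const_mul, intervalIntegral.integral_const_mul] at h1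
    refine h1.trans ?_
    have : ((2 * a + 2) * (H + 3) + (2 + 2 * |2 / μ - a|)) / R =
      ((2 * a + 2) / R) * (H + 3) + ((2 + 2 * |2 / μ - a|) / R) * 1 := by ring
    rw [this]
    gcongr
  have hL0 : L 0 - 1 = Real.log a + Real.log μ := by simp [hL, ha]
  have b1 : |-((2 / R) * (a * (L 0 - 1)))| = 2 * a * |Real.log a + Real.log μ| / R := by
    rw [hL0, abs_neg, abs_mul, abs_mul, abs_of_pos ha0, abs_of_pos (by positivity : 0 < 2 / R)]; ring
  have b2 : |(1 / μ - a) * a * (1 - ∫ v in (0:ℝ)..R, E1 v)| ≤ |1 / μ - a| * a * (2 * μ) / R := by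
    rw [abs_mul, abs_mul, abs_of_pos ha0, abs_of_nonneg (by linarith : 0 ≤ 1 - ∫ v in (0:ℝ)..R, E1 v), mul_div_assoc]
    gcongr
    linarith
  calc _ ≤ 2 * a * |Real.log a + Real.log μ| / R + |1 / μ - a| * a * (2 * μ) / R +
        ((2 * a + 2) * (H + 3) + (2 + 2 * |2 / μ - a|)) / R := by
        refine (abs_sub _ _).trans (add_le_add ((abs_add_le _ _).trans (add_le_add b1.le b2)) hWle)
    _ = _ := by ring
open MeasureTheory Set Filter

lemma bdy_lim (G : ℝ → ℝ) (hG : IntegrableOn G (Ioi 0)) :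
    Tendsto (fun n : ℕ => ∫ v in (0:ℝ)..((n:ℝ) + 1), (1 - v / ((n:ℝ) + 1)) ^ 2 * G v) atTop
      (nhds (∫ v in Ioi (0:ℝ), G v)) := by
  have e : ∀ n : ℕ, ∫ v in (0:ℝ)..((n:ℝ) + 1), (1 - v / ((n:ℝ) + 1)) ^ 2 * G v =
      ∫ v in Ioi (0:ℝ), (Ioc (0:ℝ) ((n:ℝ) + 1)).indicator (fun v => (1 - v / ((n:ℝ) + 1)) ^ 2 * G v) v := by
    intro n
    rw [intervalIntegral.integral_of_le (by positivity), setIntegral_indicator measurableSet_Ioc,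
      inter_eq_self_of_subset_right Ioc_subset_Ioi_self]
  simp_rw [e]
  apply tendsto_integral_of_dominated_convergence (fun v => |G v|)
  · intro n
    apply AEStronglyMeasurable.indicator _ measurableSet_Ioc
    exact (Continuous.aestronglyMeasurable (by fun_prop)).mul hG.1
  · exact hG.abs
  · intro n
    refine Eventually.of_forall (fun v => ?_)
    by_cases hv : v ∈ Ioc (0:ℝ) ((n:ℝ) + 1)
    · rw [indicator_of_mem hv, norm_mul, Real.norm_eq_abs, Real.norm_eq_abs]
      have h1 : v / ((n:ℝ) + 1) ≤ 1 := by rw [div_le_one (by positivity)]; exact hv.2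
      have h2 : 0 ≤ v / ((n:ℝ) + 1) := div_nonneg hv.1.le (by positivity)
      apply mul_le_of_le_one_left (abs_nonneg _)
      rw [abs_of_nonneg (by positivity)]
      exact pow_le_one₀ (by linarith) (by linarith)
    · rw [indicator_of_notMem hv]; simp
  · filter_upwards [ae_restrict_mem measurableSet_Ioi] with v hv
    have hv : 0 < v := hv
    have h1 : Tendsto (fun n : ℕ => (1 - v / ((n:ℝ) + 1)) ^ 2 * G v) atTop (nhds ((1 - 0) ^ 2 * G v)) := by
      have : Tendsto (fun n : ℕ => v / ((n:ℝ) + 1)) atTop (nhds 0) :=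
        tendsto_const_nhds.div_atTop (tendsto_atTop_add_const_right _ _ tendsto_natCast_atTop_atTop)
      exact ((tendsto_const_nhds.sub this).pow 2).mul_const _
    simp only [sub_zero, one_pow, one_mul] at h1
    refine h1.congr' ?_
    obtain ⟨N, hN⟩ := exists_nat_gt v
    filter_upwards [eventually_ge_atTop N] with n hn
    rw [indicator_of_mem]
    refine ⟨hv, ?_⟩
    have : (N:ℝ) ≤ n := by exact_mod_cast hn
    linarith

lemma bdy_lower (F F1 : ℝ → ℝ) (a : ℝ)
    (hF : ∀ v, 0 ≤ v → HasDerivAt F (F1 v) v)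
    (hF1 : ContinuousOn F1 (Ici 0))
    (hpos : ∀ v, 0 ≤ v → 0 < F v)
    (hint : IntegrableOn F (Ioi 0))
    (hmass : ∫ v in Ioi (0:ℝ), F v = 1)
    (p q R : ℝ) (hp : 0 ≤ p) (hpq : p ≤ q) (hqR : q ≤ R) (hR : 0 < R) :
    (1 - q / R) ^ 2 * (F q - F p + a * ∫ v in p..q, F v) ^ 2 ≤
      ∫ v in (0:ℝ)..R, (1 - v / R) ^ 2 * ((F1 v + a * F v) ^ 2 / F v) := by
  have cF : ContinuousOn F (Ici 0) := fun v hv => (hF v hv).continuousAt.continuousWithinAt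
  have s1 : uIcc p q ⊆ Ici 0 := by rw [uIcc_of_le hpq]; intro v hv; exact hp.trans hv.1
  have s2 : uIcc 0 R ⊆ Ici 0 := by rw [uIcc_of_le hR.le]; intro v hv; exact hv.1
  have iF := (cF.mono s1).intervalIntegrable (μ := volume)
  have iF1 := (hF1.mono s1).intervalIntegrable (μ := volume)
  set M := F q - F p + a * ∫ v in p..q, F v with hM
  have eM : ∫ v in p..q, (F1 v + a * F v) = M := by
    rw [intervalIntegral.integral_add iF1 (iF.const_mul a), intervalIntegral.integral_const_mul,
      intervalIntegral.integral_eq_sub_of_hasDerivAt (fun v hv => hF v (s1 hv)) iF1]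
  have cQ : ContinuousOn (fun v => (F1 v + a * F v) ^ 2 / F v) (Ici 0) :=
    ((hF1.add (cF.const_smul a)).pow 2).div cF (fun v hv => (hpos v hv).ne')
  have cQ' : ContinuousOn (fun v => (1 - v / R) ^ 2 * ((F1 v + a * F v) ^ 2 / F v)) (Ici 0) :=
    ContinuousOn.mul (by fun_prop) cQ
  have hFle : ∫ v in p..q, F v ≤ 1 := by
    rw [intervalIntegral.integral_of_le hpq, ← hmass]
    exact setIntegral_mono_set hint (by
      filter_upwards [ae_restrict_mem measurableSet_Ioi] with v hv using (hpos v (le_of_lt hv)).le)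
      (Ioc_subset_Ioi_self.trans (Ioi_subset_Ioi hp)).eventuallyLE
  have h1 : M ^ 2 ≤ ∫ v in p..q, ((F1 v + a * F v) ^ 2 / F v) := by
    have : ∫ v in p..q, ((2 * M) * (F1 v + a * F v) - M ^ 2 * F v) ≤ ∫ v in p..q, ((F1 v + a * F v) ^ 2 / F v) := by
      refine intervalIntegral.integral_mono_on hpq (((iF1.add (iF.const_mul a)).const_mul _).sub (iF.const_mul _))
        (cQ.mono s1).intervalIntegrable ?_
      intro v hv
      have := hpos v (hp.trans hv.1)
      rw [le_div_iff₀ this]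
      nlinarith [sq_nonneg ((F1 v + a * F v) - M * F v)]
    rw [intervalIntegral.integral_sub ((iF1.add (iF.const_mul a)).const_mul _) (iF.const_mul _),
      intervalIntegral.integral_const_mul, intervalIntegral.integral_const_mul, eM] at this
    nlinarith [sq_nonneg M]
  have h2 : (1 - q / R) ^ 2 * ∫ v in p..q, ((F1 v + a * F v) ^ 2 / F v) ≤
      ∫ v in p..q, (1 - v / R) ^ 2 * ((F1 v + a * F v) ^ 2 / F v) := by
    rw [← intervalIntegral.integral_const_mul]
    refine intervalIntegral.integral_mono_on hpq ((cQ.mono s1).intervalIntegrable.const_mul _)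
        (cQ'.mono s1).intervalIntegrable ?_
    intro v hv
    have := hpos v (hp.trans hv.1)
    have h3 : q / R ≤ 1 := by rw [div_le_one hR]; exact hqR
    have h4 : v / R ≤ q / R := by gcongr; exact hv.2
    have : 0 ≤ 1 - q / R := by linarith
    gcongr
  have h3 : ∫ v in p..q, (1 - v / R) ^ 2 * ((F1 v + a * F v) ^ 2 / F v) ≤
      ∫ v in (0:ℝ)..R, (1 - v / R) ^ 2 * ((F1 v + a * F v) ^ 2 / F v) := by
    refine intervalIntegral.integral_mono_interval hp hpq hqR ?_ (cQ'.mono s2).intervalIntegrable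
    filter_upwards [ae_restrict_mem measurableSet_Ioc] with v hv
    have := hpos v hv.1.le
    simp only [Pi.zero_apply]; positivity
  calc _ ≤ _ := mul_le_mul_of_nonneg_left h1 (sq_nonneg _)
    _ ≤ _ := h2.trans h3

lemma bdy_diff (G k : ℝ → ℝ) (hG : ∀ v, 0 ≤ v → HasDerivAt G (k v) v)
    (hk : ∀ x, 0 ≤ x → IntervalIntegrable k volume 0 x)
    (R h C : ℝ) (hR : 0 ≤ R) (hh : 0 ≤ h) (hC : ∫ v in (0:ℝ)..(R + h), |k v| ≤ C) :
    ∫ v in (0:ℝ)..R, |G (v + h) - G v| ≤ h * C := by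
  set P : ℝ → ℝ := fun x => ∫ v in (0:ℝ)..x, |k v| with hP
  have cP : ContinuousOn P (Icc 0 (R + h)) := by
    have := intervalIntegral.continuousOn_primitive_interval (f := fun v => |k v|) (μ := volume) (a := 0) (b := R + h)
      (by rw [uIcc_of_le (by linarith), integrableOn_Icc_iff_integrableOn_Ioc]; exact (hk (R+h) (by linarith)).abs.1)
    rwa [uIcc_of_le (by linarith)] at this
  have cG : ContinuousOn G (Ici 0) := fun v hv => (hG v hv).continuousAt.continuousWithinAt
  have hkk : ∀ x y, 0 ≤ x → 0 ≤ y → IntervalIntegrable k volume x y := fun x y hx hy =>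
    (hk x hx).symm.trans (hk y hy)
  have iP : ∀ x y, 0 ≤ x → x ≤ R + h → 0 ≤ y → y ≤ R + h → IntervalIntegrable P volume x y := by
    intro x y h1 h2 h3 h4
    exact (cP.mono (uIcc_subset_Icc ⟨h1, h2⟩ ⟨h3, h4⟩)).intervalIntegrable
  have iPh : IntervalIntegrable (fun v => P (v + h)) volume 0 R := by
    apply ContinuousOn.intervalIntegrable
    rw [uIcc_of_le hR]
    exact cP.comp (by fun_prop) (fun v hv => ⟨by linarith [hv.1], by linarith [hv.2]⟩)
  have h1 : ∫ v in (0:ℝ)..R, |G (v + h) - G v| ≤ ∫ v in (0:ℝ)..R, (P (v + h) - P v) := by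
    refine intervalIntegral.integral_mono_on hR ?_ (iPh.sub (iP 0 R le_rfl (by linarith) hR (by linarith))) ?_
    · apply ContinuousOn.intervalIntegrable
      rw [uIcc_of_le hR]
      refine ((cG.comp (by fun_prop) ?_).sub (cG.mono ?_)).abs
      · intro v hv; exact (add_nonneg hv.1 hh : 0 ≤ v + h)
      · intro v hv; exact hv.1
    · intro v hv
      have hv0 := hv.1
      rw [← intervalIntegral.integral_eq_sub_of_hasDerivAt (f' := k) (a := v) (b := v + h) (fun x hx => hG x (by
        rw [uIcc_of_le (by linarith)] at hx; linarith [hx.1])) (hkk _ _ hv0 (by linarith))]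
      refine (intervalIntegral.abs_integral_le_integral_abs (by linarith)).trans (le_of_eq ?_)
      simp only [hP]
      rw [intervalIntegral.integral_interval_sub_left (hk _ (by linarith)).abs (hk _ hv0).abs]
  refine h1.trans ?_
  rw [intervalIntegral.integral_sub iPh (iP 0 R le_rfl (by linarith) hR (by linarith)),
    intervalIntegral.integral_comp_add_right (fun v => P v) h, zero_add]
  have e1 : (∫ v in h..(R+h), P v) = (∫ v in (0:ℝ)..(R+h), P v) - ∫ v in (0:ℝ)..h, P v := by
    rw [intervalIntegral.integral_interval_sub_left] <;> apply iP <;> linarith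
  have e2 : (∫ v in R..(R+h), P v) = (∫ v in (0:ℝ)..(R+h), P v) - ∫ v in (0:ℝ)..R, P v := by
    rw [intervalIntegral.integral_interval_sub_left] <;> apply iP <;> linarith
  have e3 : 0 ≤ ∫ v in (0:ℝ)..h, P v := by
    apply intervalIntegral.integral_nonneg hh
    intro x hx
    exact intervalIntegral.integral_nonneg hx.1 (fun _ _ => abs_nonneg _)
  have e4 : ∫ v in R..(R+h), P v ≤ ∫ v in R..(R+h), C := by
    refine intervalIntegral.integral_mono_on (by linarith) (by apply iP <;> linarith) (by simp) ?_
    intro x hx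
    refine le_trans ?_ hC
    refine intervalIntegral.integral_mono_interval le_rfl (by linarith [hx.1]) hx.2 ?_ (hk _ (by linarith)).abs
    exact Eventually.of_forall (fun _ => abs_nonneg _)
  simp at e4
  linarith

lemma bdy_diff2 (F F1 F2 : ℝ → ℝ) (hF : ∀ v, 0 ≤ v → HasDerivAt F (F1 v) v)
    (hF1 : ∀ v, 0 ≤ v → HasDerivAt F1 (F2 v) v)
    (hk : IntegrableOn F2 (Ioi 0))
    (R h : ℝ) (hR : 0 ≤ R) (hh : 0 ≤ h) :
    ∫ v in (0:ℝ)..R, |F (v + 2 * h) - 2 * F (v + h) + F v| ≤ h ^ 2 * ∫ v in Ioi (0:ℝ), |F2 v| := by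
  have cF1 : ContinuousOn F1 (Ici 0) := fun v hv => (hF1 v hv).continuousAt.continuousWithinAt
  have hC : ∀ R, 0 ≤ R → ∫ v in (0:ℝ)..R, |F2 v| ≤ ∫ v in Ioi (0:ℝ), |F2 v| := by
    intro R hR
    rw [intervalIntegral.integral_of_le hR]
    exact setIntegral_mono_set hk.abs (Eventually.of_forall (fun _ => abs_nonneg _)) Ioc_subset_Ioi_self.eventuallyLE
  have h1 := bdy_diff F1 F2 hF1 (fun x hx => by
    rw [intervalIntegrable_iff_integrableOn_Ioc_of_le hx]; exact hk.mono_set Ioc_subset_Ioi_self)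
    (R + h) h _ (by linarith) hh (hC _ (by linarith))
  have h2 := bdy_diff (fun v => F (v + h) - F v) (fun v => F1 (v + h) - F1 v)
    (fun v hv => ((hF (v + h) (by linarith)).comp_add_const v h).sub (hF v hv)) (fun x hx => by
      apply ContinuousOn.intervalIntegrable
      rw [uIcc_of_le hx]
      refine ((cF1.comp (by fun_prop) ?_).sub (cF1.mono ?_))
      · intro v hv; exact (add_nonneg hv.1 hh : 0 ≤ v + h)
      · intro v hv; exact hv.1) R h _ hR hh h1
  calc _ = _ := by
        congr 1; funext v; congr 1
        rw [show v + h + h = v + 2 * h by ring]; ring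
    _ ≤ _ := h2
    _ = _ := by ring

lemma bdy_second (F F1 F2 : ℝ → ℝ) (hF : ∀ v, 0 ≤ v → HasDerivAt F (F1 v) v)
    (hF1 : ∀ v, 0 ≤ v → HasDerivAt F1 (F2 v) v) (v : ℝ) (hv : 0 ≤ v) (u : ℕ → ℝ)
    (hu : ∀ n, 0 < u n) (hu0 : Tendsto u atTop (nhds 0)) :
    Tendsto (fun n => (F (v + 2 * u n) - 2 * F (v + u n) + F v) / (u n) ^ 2) atTop (nhds (F2 v)) := by
  rw [Metric.tendsto_atTop]
  intro ε hε
  have hd := hF1 v hv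
  rw [hasDerivAt_iff_isLittleO, Asymptotics.isLittleO_iff] at hd
  have := hd (show 0 < ε / 4 by positivity)
  rw [Metric.eventually_nhds_iff] at this
  obtain ⟨δ, hδ, hb⟩ := this
  have hb' : ∀ y, 0 ≤ y → y < δ → |F1 (v + y) - F1 v - y * F2 v| ≤ ε / 4 * y := by
    intro y hy hyd
    have := @hb (v + y) (by rw [Real.dist_eq]; simpa [abs_of_nonneg hy] using hyd)
    simpa [abs_of_nonneg hy] using this
  obtain ⟨N, hN⟩ := (Metric.tendsto_atTop.1 hu0) (δ / 2) (by positivity)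
  refine ⟨N, fun n hn => ?_⟩
  have h0 := hu n
  have h1 := hN n hn
  rw [Real.dist_eq, sub_zero, abs_of_pos h0] at h1
  set h := u n
  obtain ⟨ξ, hξ, he⟩ := exists_hasDerivAt_eq_slope (fun x => F (v + h + x) - F (v + x))
    (fun x => F1 (v + h + x) - F1 (v + x)) h0 (by
      intro x hx
      refine ContinuousAt.continuousWithinAt ?_
      exact (((hF (v + h + x) (by linarith [hx.1])).comp_const_add (v+h) x).sub
        ((hF (v + x) (by linarith [hx.1])).comp_const_add v x)).continuousAt) (by
      intro x hx
      exact (((hF (v + h + x) (by linarith [hx.1])).comp_const_add (v+h) x).sub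
        ((hF (v + x) (by linarith [hx.1])).comp_const_add v x)))
  have e1 : (F (v + 2 * h) - 2 * F (v + h) + F v) / h ^ 2 = (F1 (v + h + ξ) - F1 (v + ξ)) / h := by
    rw [he, show v + h + h = v + 2 * h by ring]; simp only [add_zero, sub_zero]; field_simp; ring
  rw [e1, Real.dist_eq]
  have b1 := hb' (h + ξ) (by linarith [hξ.1]) (by linarith [hξ.2])
  have b2 := hb' ξ hξ.1.le (by linarith [hξ.2])
  rw [← add_assoc] at b1
  have e2 : (F1 (v + h + ξ) - F1 (v + ξ)) / h - F2 v =
    ((F1 (v + h + ξ) - F1 v - (h + ξ) * F2 v) - (F1 (v + ξ) - F1 v - ξ * F2 v)) / h := by field_simp; ring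
  rw [e2, abs_div, abs_of_pos h0, div_lt_iff₀ h0]
  refine (abs_sub _ _).trans_lt ?_
  nlinarith [hξ.2]

lemma bdy_fatou (F F1 F2 : ℝ → ℝ) (hF : ∀ v, 0 ≤ v → HasDerivAt F (F1 v) v)
    (hF1 : ∀ v, 0 ≤ v → HasDerivAt F1 (F2 v) v)
    (hk : IntegrableOn F2 (Ioi 0)) (R C : ℝ) (hR : 0 ≤ R) (hC : 0 ≤ C)
    (h : ∀ n : ℕ, ∫ v in (0:ℝ)..R, |F (v + 2 * (1 / ((n:ℝ) + 1))) - 2 * F (v + 1 / ((n:ℝ) + 1)) + F v| ≤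
      (1 / ((n:ℝ) + 1)) ^ 2 * C) :
    ∫ v in (0:ℝ)..R, |F2 v| ≤ C := by
  have cF : ContinuousOn F (Ici 0) := fun v hv => (hF v hv).continuousAt.continuousWithinAt
  set u : ℕ → ℝ := fun n => 1 / ((n:ℝ) + 1) with hu
  have hu1 : ∀ n, 0 < u n := fun n => by simp only [hu]; positivity
  set Δ : ℕ → ℝ → ℝ := fun n v => (F (v + 2 * u n) - 2 * F (v + u n) + F v) / (u n) ^ 2 with hΔ
  have cΔ : ∀ n, ContinuousOn (Δ n) (Icc 0 R) := by
    intro n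
    have := hu1 n
    have c1 : ContinuousOn (fun v => F (v + 2 * u n)) (Icc 0 R) :=
      cF.comp (f := fun v => v + 2 * u n) (by fun_prop) (fun v hv => (by linarith [hv.1] : 0 ≤ v + 2 * u n))
    have c2 : ContinuousOn (fun v => F (v + u n)) (Icc 0 R) :=
      cF.comp (f := fun v => v + u n) (by fun_prop) (fun v hv => (by linarith [hv.1] : 0 ≤ v + u n))
    have c3 : ContinuousOn F (Icc 0 R) := cF.mono (fun v hv => hv.1)
    exact ((c1.sub ((continuousOn_const (c := (2:ℝ))).mul c2)).add c3).div_const _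
  have hF2 : IntegrableOn (fun v => |F2 v|) (Ioc 0 R) := (hk.mono_set Ioc_subset_Ioi_self).abs
  rw [intervalIntegral.integral_of_le hR, integral_eq_lintegral_of_nonneg_ae (Eventually.of_forall (fun _ => abs_nonneg _)) hF2.1]
  apply ENNReal.toReal_le_of_le_ofReal hC
  have h1 : ∀ n, ∫⁻ v in Ioc 0 R, ENNReal.ofReal |Δ n v| ≤ ENNReal.ofReal C := by
    intro n
    have iΔ : IntegrableOn (fun v => |Δ n v|) (Ioc 0 R) :=
      (((cΔ n).integrableOn_compact isCompact_Icc).mono_set Ioc_subset_Icc_self).abs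
    rw [← ofReal_integral_eq_lintegral_ofReal iΔ (Eventually.of_forall (fun _ => abs_nonneg _))]
    apply ENNReal.ofReal_le_ofReal
    rw [← intervalIntegral.integral_of_le hR]
    have : ∀ v, |Δ n v| = ((u n)^2)⁻¹ * |F (v + 2 * u n) - 2 * F (v + u n) + F v| := by
      intro v; simp only [hΔ]; rw [abs_div, abs_of_pos (pow_pos (hu1 n) 2)]; ring
    simp_rw [this]
    rw [intervalIntegral.integral_const_mul]
    have := hu1 n
    rw [inv_mul_le_iff₀ (by positivity)]
    exact h n
  calc ∫⁻ v in Ioc 0 R, ENNReal.ofReal |F2 v| = ∫⁻ v in Ioc 0 R, liminf (fun n => ENNReal.ofReal |Δ n v|) atTop := by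
        apply setLIntegral_congr_fun measurableSet_Ioc
        intro v hv
        have := bdy_second F F1 F2 hF hF1 v hv.1.le u hu1 tendsto_one_div_add_atTop_nhds_zero_nat
        exact ((ENNReal.tendsto_ofReal this.abs).liminf_eq).symm
    _ ≤ liminf (fun n => ∫⁻ v in Ioc 0 R, ENNReal.ofReal |Δ n v|) atTop := by
        apply lintegral_liminf_le'
        intro n
        exact ((((cΔ n).mono Ioc_subset_Icc_self).aestronglyMeasurable measurableSet_Ioc).aemeasurable.abs).ennreal_ofReal
    _ ≤ liminf (fun n : ℕ => ENNReal.ofReal C) atTop := by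
        apply liminf_le_liminf (Eventually.of_forall h1)
    _ = _ := by simp
open MeasureTheory Set Filter

lemma bdy_clamp_cont (f : ℝ → ℝ → ℝ)
    (hcont : ContinuousOn (fun p : ℝ × ℝ => f p.1 p.2) (Ici 0 ×ˢ Ici 0)) :
    Continuous (fun p : ℝ × ℝ => f (max p.1 0) (max p.2 0)) := by
  have : Continuous (fun p : ℝ × ℝ => (max p.1 0, max p.2 0)) := by fun_prop
  exact hcont.comp_continuous this (fun p => ⟨le_max_right p.1 0, le_max_right p.2 0⟩)

lemma bdy_ft_meas (f ft : ℝ → ℝ → ℝ)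
    (hcont : ContinuousOn (fun p : ℝ × ℝ => f p.1 p.2) (Ici 0 ×ˢ Ici 0))
    (hft : ∀ v t : ℝ, 0 ≤ v → 0 ≤ t → HasDerivAt (fun s => f v s) (ft v t) t) :
    Measurable (fun p : ℝ × ℝ => ft (max p.1 0) (max p.2 0)) := by
  have hc := bdy_clamp_cont f hcont
  refine measurable_of_tendsto_metrizable (f := fun (n : ℕ) (p : ℝ × ℝ) =>
    (1 / ((n:ℝ) + 1))⁻¹ * (f (max p.1 0) (max (max p.2 0 + 1 / ((n:ℝ) + 1)) 0) - f (max p.1 0) (max p.2 0))) ?_ ?_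
  · intro n
    have h1 : Continuous (fun p : ℝ × ℝ => f (max p.1 0) (max (max p.2 0 + 1 / ((n:ℝ) + 1)) 0)) :=
      hc.comp (g := fun p : ℝ × ℝ => f (max p.1 0) (max p.2 0))
        (f := fun p : ℝ × ℝ => (p.1, max p.2 0 + 1 / ((n:ℝ) + 1))) (by fun_prop)
    exact ((h1.sub hc).const_smul ((1 / ((n:ℝ) + 1))⁻¹)).measurable
  · rw [tendsto_pi_nhds]
    rintro ⟨v, t⟩
    have hd := hft (max v 0) (max t 0) (le_max_right _ _) (le_max_right _ _)
    rw [hasDerivAt_iff_tendsto_slope_zero] at hd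
    have hu : Tendsto (fun n : ℕ => 1 / ((n:ℝ) + 1)) atTop (nhdsWithin 0 {0}ᶜ) := by
      rw [tendsto_nhdsWithin_iff]
      refine ⟨tendsto_one_div_add_atTop_nhds_zero_nat, Eventually.of_forall (fun n => ?_)⟩
      simp only [mem_compl_iff, mem_singleton_iff]; positivity
    refine (hd.comp hu).congr (fun n => ?_)
    have : (0:ℝ) ≤ max t 0 + 1 / ((n:ℝ) + 1) := add_nonneg (le_max_right _ _) (by positivity)
    simp only [Function.comp, smul_eq_mul, max_eq_left this]

set_option maxHeartbeats 1600000 in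
lemma bdy_time (μ : ℝ) (hμ : 0 < μ) (f ft fv fvv : ℝ → ℝ → ℝ)
    (hcont : ContinuousOn (fun p : ℝ × ℝ => f p.1 p.2) (Ici 0 ×ˢ Ici 0))
    (hfvv : ∀ v t : ℝ, 0 ≤ v → 0 ≤ t → HasDerivAt (fun w => fv w t) (fvv v t) v)
    (hft : ∀ v t : ℝ, 0 ≤ v → 0 ≤ t → HasDerivAt (fun s => f v s) (ft v t) t)
    (hpos : ∀ v t : ℝ, 0 ≤ v → 0 ≤ t → 0 < f v t)
    (hint_fvv : ∀ t : ℝ, 0 ≤ t → IntegrableOn (fun v => fvv v t) (Ioi 0))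
    (hPDE : ∀ v t : ℝ, 0 < v → 0 ≤ t → ft v t = fvv v t + f 0 t * fv v t)
    (hBC : ∀ t : ℝ, 0 ≤ t → fv 0 t + (f 0 t) ^ 2 = 0)
    (t1 t2 N R : ℝ) (ht1 : 0 ≤ t1) (ht : t1 ≤ t2) (hR : 0 < R)
    (hN : ∀ s ∈ Icc t1 t2, ∀ r, 0 ≤ r → ∫ v in (0:ℝ)..r, |fvv v s| ≤ N) :
    IntervalIntegrable (fun s => ∫ v in (0:ℝ)..R, (1 - v / R) ^ 2 *
        ((fvv v s + f 0 s * fv v s) * (Real.log (f v s / ((1 / μ) * Real.exp (-v / μ))) + 1))) volume t1 t2 ∧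
    ∫ s in t1..t2, (∫ v in (0:ℝ)..R, (1 - v / R) ^ 2 *
        ((fvv v s + f 0 s * fv v s) * (Real.log (f v s / ((1 / μ) * Real.exp (-v / μ))) + 1))) =
    (∫ v in (0:ℝ)..R, (1 - v / R) ^ 2 * (f v t2 * Real.log (f v t2 / ((1 / μ) * Real.exp (-v / μ)))))
    - ∫ v in (0:ℝ)..R, (1 - v / R) ^ 2 * (f v t1 * Real.log (f v t1 / ((1 / μ) * Real.exp (-v / μ)))) := by
  set M : ℝ → ℝ := fun v => (1 / μ) * Real.exp (-v / μ) with hM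
  have hMpos : ∀ v, 0 < M v := fun v => by simp only [hM]; positivity
  have cM : Continuous M := by simp only [hM]; fun_prop
  set K : ℝ × ℝ → ℝ := fun p => (1 - p.2 / R) ^ 2 * (ft p.2 p.1 * (Real.log (f p.2 p.1 / M p.2) + 1)) with hK
  set νt := (volume : Measure ℝ).restrict (Ioc t1 t2) with hνt
  set νv := (volume : Measure ℝ).restrict (Ioc 0 R) with hνv
  have hN0 : 0 ≤ N := by simpa using hN t1 ⟨le_rfl, ht⟩ 0 le_rfl
  -- continuity and bounds
  have cswap : ContinuousOn (fun p : ℝ × ℝ => f p.2 p.1) (Icc t1 t2 ×ˢ Icc 0 R) :=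
    hcont.comp (f := fun p : ℝ × ℝ => (p.2, p.1)) (by fun_prop)
      (fun p hp => ⟨hp.2.1, ht1.trans hp.1.1⟩)
  have cℓ : ContinuousOn (fun p : ℝ × ℝ => Real.log (f p.2 p.1 / M p.2) + 1) (Icc t1 t2 ×ˢ Icc 0 R) := by
    refine ContinuousOn.add (ContinuousOn.log (cswap.div (by fun_prop) (fun p _ => (hMpos _).ne')) ?_) continuousOn_const
    intro p hp
    exact (div_pos (hpos _ _ hp.2.1 (ht1.trans hp.1.1)) (hMpos _)).ne'
  obtain ⟨B, hB⟩ := (isCompact_Icc.prod isCompact_Icc).exists_bound_of_continuousOn cℓ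
  obtain ⟨A, hA⟩ := (isCompact_Icc.prod isCompact_Icc).exists_bound_of_continuousOn cswap
  have hA0 : ∀ s ∈ Icc t1 t2, |f 0 s| ≤ A := fun s hs => hA (s, 0) ⟨hs, le_rfl, hR.le⟩
  have hApos : 0 ≤ A := (abs_nonneg _).trans (hA0 t1 ⟨le_rfl, ht⟩)
  have hBpos : 0 ≤ B := (norm_nonneg _).trans (hB (t1, 0) ⟨⟨le_rfl, ht⟩, le_rfl, hR.le⟩)
  have cfv : ∀ s, 0 ≤ s → ContinuousOn (fun v => fv v s) (Ici 0) := fun s hs v hv =>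
    (hfvv v s hv hs).continuousAt.continuousWithinAt
  have hfvb : ∀ s ∈ Icc t1 t2, ∀ v, 0 ≤ v → |fv v s| ≤ A ^ 2 + N := by
    intro s hs v hv
    have hs0 := ht1.trans hs.1
    have i2 : IntervalIntegrable (fun w => fvv w s) volume 0 v := by
      rw [intervalIntegrable_iff_integrableOn_Ioc_of_le hv]
      exact (hint_fvv s hs0).mono_set Ioc_subset_Ioi_self
    have := intervalIntegral.integral_eq_sub_of_hasDerivAt (a := 0) (b := v)
      (fun x hx => hfvv x s (by rw [uIcc_of_le hv] at hx; exact hx.1) hs0) i2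
    have h2 : fv v s = (∫ w in (0:ℝ)..v, fvv w s) - f 0 s ^ 2 := by have := hBC s hs0; linarith
    rw [h2]
    refine (abs_sub _ _).trans ?_
    have h3 := (intervalIntegral.abs_integral_le_integral_abs (f := fun w => fvv w s) (μ := volume) hv).trans (hN s hs v hv)
    have h4 : |f 0 s ^ 2| ≤ A ^ 2 := by
      rw [abs_pow]; exact pow_le_pow_left₀ (abs_nonneg _) (hA0 s hs) 2
    linarith
  -- measurability
  have hKm : AEStronglyMeasurable K (νt.prod νv) := by
    have hc := bdy_clamp_cont f hcont
    have hm := bdy_ft_meas f ft hcont hft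
    have m1 : Measurable (fun p : ℝ × ℝ => (1 - p.2 / R) ^ 2 *
        (ft (max p.2 0) (max p.1 0) * (Real.log (f (max p.2 0) (max p.1 0) / M p.2) + 1))) := by
      have a1 : Measurable (fun p : ℝ × ℝ => ft (max p.2 0) (max p.1 0)) := hm.comp measurable_swap
      have a2 : Measurable (fun p : ℝ × ℝ => f (max p.2 0) (max p.1 0)) := hc.measurable.comp measurable_swap
      have a3 : Measurable (fun p : ℝ × ℝ => M p.2) := cM.measurable.comp measurable_snd
      have a4 : Measurable (fun p : ℝ × ℝ => (1 - p.2 / R) ^ 2) := by fun_prop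
      exact a4.mul (a1.mul (((a2.div a3).log).add_const 1))
    refine m1.aestronglyMeasurable.congr ?_
    rw [hνt, hνv, Measure.prod_restrict]
    filter_upwards [ae_restrict_mem (measurableSet_Ioc.prod measurableSet_Ioc)] with p hp
    have h1 : max p.1 0 = p.1 := max_eq_left (ht1.trans hp.1.1.le)
    have h2 : max p.2 0 = p.2 := max_eq_left hp.2.1.le
    simp only [hK, h1, h2]
  -- inner
  have hKeq : ∀ s ∈ Icc t1 t2, ∀ v ∈ Ioc 0 R, K (s, v) = (1 - v / R) ^ 2 *
        ((fvv v s + f 0 s * fv v s) * (Real.log (f v s / M v) + 1)) := by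
    intro s hs v hv
    simp only [hK]; rw [hPDE v s hv.1 (ht1.trans hs.1)]
  have hKb : ∀ s ∈ Icc t1 t2, ∀ v ∈ Ioc 0 R, ‖K (s, v)‖ ≤ B * (|fvv v s| + A * (A ^ 2 + N)) := by
    intro s hs v hv
    rw [hKeq s hs v hv, norm_mul, norm_mul]
    have b1 : ‖(1 - v / R) ^ 2‖ ≤ 1 := by
      have h1 : v / R ≤ 1 := by rw [div_le_one hR]; exact hv.2
      have h2 : 0 ≤ v / R := div_nonneg hv.1.le hR.le
      rw [Real.norm_eq_abs, abs_of_nonneg (by positivity)]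
      exact pow_le_one₀ (by linarith) (by linarith)
    have b2 : ‖fvv v s + f 0 s * fv v s‖ ≤ |fvv v s| + A * (A ^ 2 + N) := by
      rw [Real.norm_eq_abs]
      refine (abs_add_le _ _).trans ?_
      rw [abs_mul]
      gcongr
      · exact hA0 s hs
      · exact hfvb s hs v hv.1.le
    have b3 := hB (s, v) ⟨hs, hv.1.le, hv.2⟩
    have b4 : 0 ≤ |fvv v s| + A * (A ^ 2 + N) := by positivity
    calc _ ≤ 1 * ((|fvv v s| + A * (A ^ 2 + N)) * B) := by gcongr
      _ = _ := by ring
  have ibd : ∀ s ∈ Icc t1 t2, Integrable (fun v => B * (|fvv v s| + A * (A ^ 2 + N))) νv := by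
    intro s hs
    have : Integrable (fun v => |fvv v s|) νv :=
      ((hint_fvv s (ht1.trans hs.1)).mono_set Ioc_subset_Ioi_self).abs
    exact (this.add (integrable_const _)).const_mul _
  have hcontslice : ∀ s ∈ Icc t1 t2, Integrable (fun v => K (s, v)) νv := by
    intro s hs
    have hs0 := ht1.trans hs.1
    have i1 : IntervalIntegrable (fun v => fvv v s + f 0 s * fv v s) volume 0 R := by
      refine IntervalIntegrable.add ?_ ?_
      · rw [intervalIntegrable_iff_integrableOn_Ioc_of_le hR.le]
        exact (hint_fvv s hs0).mono_set Ioc_subset_Ioi_self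
      · refine (ContinuousOn.intervalIntegrable ?_).const_mul _
        refine (cfv s hs0).mono ?_
        rw [uIcc_of_le hR.le]; intro v hv; exact hv.1
    have c2 : ContinuousOn (fun v => Real.log (f v s / M v) + 1) (uIcc 0 R) := by
      rw [uIcc_of_le hR.le]
      exact cℓ.comp (f := fun v => (s, v)) (by fun_prop) (fun v hv => ⟨hs, hv⟩)
    have i3 := (i1.mul_continuousOn c2).continuousOn_mul (g := fun v => (1 - v / R) ^ 2) (by fun_prop)
    refine (i3.1).congr ?_
    filter_upwards [ae_restrict_mem measurableSet_Ioc] with v hv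
    rw [hKeq s hs v hv]
  have hKint : Integrable K (νt.prod νv) := by
    rw [integrable_prod_iff hKm]
    constructor
    · filter_upwards [ae_restrict_mem measurableSet_Ioc] with s hs
      exact hcontslice s ⟨hs.1.le, hs.2⟩
    · refine Integrable.of_bound (C := B * (N + R * (A * (A ^ 2 + N)))) hKm.norm.integral_prod_right' ?_
      filter_upwards [ae_restrict_mem measurableSet_Ioc] with s hs
      have hs' : s ∈ Icc t1 t2 := ⟨hs.1.le, hs.2⟩
      rw [Real.norm_eq_abs, abs_of_nonneg (integral_nonneg (fun _ => norm_nonneg _))]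
      have h1 : ∫ v, ‖K (s, v)‖ ∂νv ≤ ∫ v, B * (|fvv v s| + A * (A ^ 2 + N)) ∂νv := by
        apply integral_mono_ae (hcontslice s hs').norm (ibd s hs')
        filter_upwards [ae_restrict_mem measurableSet_Ioc] with v hv using hKb s hs' v hv
      refine h1.trans ?_
      have i5 : Integrable (fun v => |fvv v s|) νv :=
        ((hint_fvv s (ht1.trans hs'.1)).mono_set Ioc_subset_Ioi_self).abs
      rw [integral_const_mul, integral_add i5 (integrable_const _)]
      have h2 := hN s hs' R hR.le
      rw [intervalIntegral.integral_of_le hR.le] at h2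
      have h3 : ∫ v, (A * (A ^ 2 + N)) ∂νv = R * (A * (A ^ 2 + N)) := by
        simp [hνv, hR.le]
      rw [h3]
      gcongr
  have hinner : ∀ s ∈ Icc t1 t2, (∫ v in (0:ℝ)..R, (1 - v / R) ^ 2 *
        ((fvv v s + f 0 s * fv v s) * (Real.log (f v s / M v) + 1))) = ∫ v, K (s, v) ∂νv := by
    intro s hs
    rw [intervalIntegral.integral_of_le hR.le]
    apply setIntegral_congr_fun measurableSet_Ioc
    intro v hv
    exact (hKeq s hs v hv).symm
  constructor
  · rw [intervalIntegrable_iff_integrableOn_Ioc_of_le ht]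
    refine (hKint.integral_prod_left).congr ?_
    filter_upwards [ae_restrict_mem measurableSet_Ioc] with s hs
    exact (hinner s ⟨hs.1.le, hs.2⟩).symm
  · have e1 : ∫ s in t1..t2, (∫ v in (0:ℝ)..R, (1 - v / R) ^ 2 *
        ((fvv v s + f 0 s * fv v s) * (Real.log (f v s / M v) + 1))) = ∫ s, ∫ v, K (s, v) ∂νv ∂νt := by
      rw [intervalIntegral.integral_of_le ht]
      apply setIntegral_congr_fun measurableSet_Ioc
      intro s hs
      exact hinner s ⟨hs.1.le, hs.2⟩
    rw [e1, integral_integral_swap (f := fun s v => K (s, v)) hKint]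
    have cΦ : ∀ t ∈ Icc t1 t2, IntervalIntegrable
        (fun v => (1 - v / R) ^ 2 * (f v t * Real.log (f v t / M v))) volume 0 R := by
      intro t htt
      apply ContinuousOn.intervalIntegrable
      rw [uIcc_of_le hR.le]
      have c2 : ContinuousOn (fun v => Real.log (f v t / M v) + 1) (Icc 0 R) :=
        cℓ.comp (f := fun v => (t, v)) (by fun_prop) (fun v hv => ⟨htt, hv⟩)
      have c3 : ContinuousOn (fun v => Real.log (f v t / M v)) (Icc 0 R) := by
        exact (c2.sub (continuousOn_const (c := (1:ℝ)))).congr (fun v _ => by simp)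
      have c4 : ContinuousOn (fun v => f v t) (Icc 0 R) :=
        cswap.comp (f := fun v => (t, v)) (by fun_prop) (fun v hv => ⟨htt, hv⟩)
      exact ContinuousOn.mul (by fun_prop) (c4.mul c3)
    rw [← intervalIntegral.integral_sub (cΦ t2 ⟨ht, le_rfl⟩) (cΦ t1 ⟨le_rfl, ht⟩),
      intervalIntegral.integral_of_le hR.le]
    apply integral_congr_ae
    filter_upwards [ae_restrict_mem measurableSet_Ioc, hKint.prod_left_ae] with v hv hiv
    have hd : ∀ s ∈ uIcc t1 t2, HasDerivAt (fun s => (1 - v / R) ^ 2 * (f v s * Real.log (f v s / M v))) (K (s, v)) s := by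
      intro s hs
      rw [uIcc_of_le ht] at hs
      have hs0 := ht1.trans hs.1
      have hp := hpos v s hv.1.le hs0
      have hd1 := hft v s hv.1.le hs0
      have hMv := hMpos v
      have := (hd1.mul ((hd1.div_const (M v)).log (div_pos hp hMv).ne')).const_mul ((1 - v / R) ^ 2)
      refine HasDerivAt.congr_deriv (f := fun s => (1 - v / R) ^ 2 * (f v s * Real.log (f v s / M v))) this ?_
      simp only [hK]
      field_simp
    have := intervalIntegral.integral_eq_sub_of_hasDerivAt hd (by
      rw [intervalIntegrable_iff_integrableOn_Ioc_of_le ht]; exact hiv)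
    rw [← this, intervalIntegral.integral_of_le ht]
/-- **Entropy dissipation for the BDY PDE.**
Let `μ > 0`, let `f∞(v) = (1/μ) e^{−v/μ}` be the Boltzmann–Gibbs equilibrium, and let `f`
be a strictly positive classical solution of the BDY PDE
`∂_t f = ∂_vv f + f(0,t) ∂_v f` with Robin boundary condition `∂_v f(0,t) + f(0,t)² = 0`,
which is for each `t` a probability density with mean `μ`, such that `f ln f` and
`(∂_v f)²/f` are integrable on `(0,∞)` for each `t`, `∂_v f ln f → 0` and `f ln f → 0` as
`v → ∞`, and such that the relative entropy `H[f|f∞](t) = ∫₀^∞ f ln(f/f∞) dv` is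
differentiable in `t` with derivative obtained by differentiating under the integral sign.
Then for all `t ≥ 0`, `d/dt H[f|f∞](t) = − D[f](t) ≤ 0`, where
`D[f](t) = ∫₀^∞ (∂_v f + f(0,t) f)²/f dv`. In particular the relative entropy decreases
monotonically in time. -/
theorem BDY_PDE_entropy_dissipation
    (μ : ℝ) (hμ : 0 < μ)
    (f ft fv fvv : ℝ → ℝ → ℝ)
    (hcont : ContinuousOn (fun p : ℝ × ℝ => f p.1 p.2) (Ici 0 ×ˢ Ici 0))
    (hfv : ∀ v t : ℝ, 0 ≤ v → 0 ≤ t → HasDerivAt (fun w => f w t) (fv v t) v)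
    (hfvv : ∀ v t : ℝ, 0 ≤ v → 0 ≤ t → HasDerivAt (fun w => fv w t) (fvv v t) v)
    (hft : ∀ v t : ℝ, 0 ≤ v → 0 ≤ t → HasDerivAt (fun s => f v s) (ft v t) t)
    (hpos : ∀ v t : ℝ, 0 ≤ v → 0 ≤ t → 0 < f v t)
    (hint : ∀ t : ℝ, 0 ≤ t → IntegrableOn (fun v => f v t) (Ioi 0))
    (hint_fv : ∀ t : ℝ, 0 ≤ t → IntegrableOn (fun v => fv v t) (Ioi 0))
    (hint_fvv : ∀ t : ℝ, 0 ≤ t → IntegrableOn (fun v => fvv v t) (Ioi 0))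
    (hint_vf : ∀ t : ℝ, 0 ≤ t → IntegrableOn (fun v => v * f v t) (Ioi 0))
    (hmass : ∀ t : ℝ, 0 ≤ t → ∫ v in Ioi (0:ℝ), f v t = 1)
    (hmean : ∀ t : ℝ, 0 ≤ t → ∫ v in Ioi (0:ℝ), v * f v t = μ)
    (hint_flogf : ∀ t : ℝ, 0 ≤ t →
      IntegrableOn (fun v => f v t * Real.log (f v t)) (Ioi 0))
    (hint_fisher : ∀ t : ℝ, 0 ≤ t →
      IntegrableOn (fun v => (fv v t) ^ 2 / f v t) (Ioi 0))
    (hdecay : ∀ t : ℝ, 0 ≤ t → Tendsto (fun v => f v t) atTop (nhds 0))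
    (hdecay_fv : ∀ t : ℝ, 0 ≤ t → Tendsto (fun v => fv v t) atTop (nhds 0))
    (hdecay_fvlog : ∀ t : ℝ, 0 ≤ t →
      Tendsto (fun v => fv v t * Real.log (f v t)) atTop (nhds 0))
    (hdecay_flog : ∀ t : ℝ, 0 ≤ t →
      Tendsto (fun v => f v t * Real.log (f v t)) atTop (nhds 0))
    (hPDE : ∀ v t : ℝ, 0 < v → 0 ≤ t → ft v t = fvv v t + f 0 t * fv v t)
    (hBC : ∀ t : ℝ, 0 ≤ t → fv 0 t + (f 0 t) ^ 2 = 0)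
    -- differentiation under the integral sign, for the mass, the mean and the entropy
    (hDUImass : ∀ t : ℝ, 0 ≤ t →
      HasDerivAt (fun s => ∫ v in Ioi (0:ℝ), f v s) (∫ v in Ioi (0:ℝ), ft v t) t)
    (hDUImean : ∀ t : ℝ, 0 ≤ t →
      HasDerivAt (fun s => ∫ v in Ioi (0:ℝ), v * f v s)
        (∫ v in Ioi (0:ℝ), v * ft v t) t)
    (hDUI : ∀ t : ℝ, 0 ≤ t →
      HasDerivAt
        (fun s => ∫ v in Ioi (0:ℝ),
          f v s * Real.log (f v s / ((1 / μ) * Real.exp (-v / μ))))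
        (∫ v in Ioi (0:ℝ),
          ft v t * (Real.log (f v t / ((1 / μ) * Real.exp (-v / μ))) + 1)) t) :
    ∀ t : ℝ, 0 ≤ t →
      deriv
        (fun s => ∫ v in Ioi (0:ℝ),
          f v s * Real.log (f v s / ((1 / μ) * Real.exp (-v / μ)))) t
        = -(∫ v in Ioi (0:ℝ), (fv v t + f 0 t * f v t) ^ 2 / f v t) ∧
      0 ≤ ∫ v in Ioi (0:ℝ), (fv v t + f 0 t * f v t) ^ 2 / f v t := by
  set H : ℝ → ℝ := fun s => ∫ v in Ioi (0:ℝ),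
          f v s * Real.log (f v s / ((1 / μ) * Real.exp (-v / μ))) with hH
  set V : ℝ → ℝ := fun s => ∫ v in Ioi (0:ℝ),
          ft v s * (Real.log (f v s / ((1 / μ) * Real.exp (-v / μ))) + 1) with hV
  set D : ℝ → ℝ := fun s => ∫ v in Ioi (0:ℝ), (fv v s + f 0 s * f v s) ^ 2 / f v s with hD
  have hHd : ∀ s, 0 ≤ s → HasDerivAt H (V s) s := hDUI
  have hD0 : ∀ s, 0 ≤ s → 0 ≤ D s := fun s hs =>
    setIntegral_nonneg measurableSet_Ioi (fun v hv => by
      have := hpos v s (le_of_lt hv) hs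
      positivity)
  have hlogint : ∀ s, 0 ≤ s → IntegrableOn
      (fun v => f v s * Real.log (f v s / ((1 / μ) * Real.exp (-v / μ)))) (Ioi 0) := by
    intro s hs
    refine IntegrableOn.congr_fun (((hint_flogf s hs).add ((hint s hs).const_mul (Real.log μ))).add
      ((hint_vf s hs).const_mul (1 / μ))) ?_ measurableSet_Ioi
    intro v hv
    simp only [Pi.add_apply]
    rw [bdy_log_eq μ hμ _ _ (hpos v s (le_of_lt hv) hs)]
    ring
  have hQint : ∀ s, 0 ≤ s → IntegrableOn (fun v => (fv v s + f 0 s * f v s) ^ 2 / f v s) (Ioi 0) := by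
    intro s hs
    refine IntegrableOn.congr_fun (((hint_fisher s hs).add ((hint_fv s hs).const_mul (2 * f 0 s))).add
      ((hint s hs).const_mul (f 0 s ^ 2))) ?_ measurableSet_Ioi
    intro v hv
    have := (hpos v s (le_of_lt hv) hs).ne'
    simp only [Pi.add_apply]
    field_simp
    ring
  set err : ℝ → ℝ → ℝ := fun a h => 2 * a * |Real.log a + Real.log μ| + |1 / μ - a| * a * (2 * μ)
      + (2 * a + 2) * (h + 3) + (2 + 2 * |2 / μ - a|) with herr
  set G : ℝ → ℝ → ℝ := fun s v => (fvv v s + f 0 s * fv v s) *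
      (Real.log (f v s / ((1 / μ) * Real.exp (-v / μ))) + 1) with hG
  set Q : ℝ → ℝ → ℝ := fun s v => (fv v s + f 0 s * f v s) ^ 2 / f v s with hQ
  have hkey : ∀ s, 0 ≤ s → ∀ R, 1 ≤ R →
      |(∫ v in (0:ℝ)..R, (1 - v / R) ^ 2 * G s v) + ∫ v in (0:ℝ)..R, (1 - v / R) ^ 2 * Q s v|
        ≤ err (f 0 s) (H s) / R := by
    intro s hs R hR
    exact bdy_key μ hμ (fun v => f v s) (fun v => fv v s) (fun v => fvv v s) (fun v hv => hfv v s hv hs)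
      (fun v hv => hfvv v s hv hs) (fun v hv => hpos v s hv hs) (hint s hs) (hint_fvv s hs) (hint_vf s hs)
      (hmass s hs) (hmean s hs) (hBC s hs) (hlogint s hs) R hR
  have hlimC : ∀ C : ℝ, Tendsto (fun n : ℕ => C / ((n:ℝ) + 1)) atTop (nhds 0) := fun C =>
    tendsto_const_nhds.div_atTop (tendsto_atTop_add_const_right _ _ tendsto_natCast_atTop_atTop)
  have hVG : ∀ s, 0 ≤ s → V s = ∫ v in Ioi (0:ℝ), G s v := by
    intro s hs
    apply setIntegral_congr_fun measurableSet_Ioi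
    intro v hv
    simp only [hG]
    rw [hPDE v s hv hs]
  -- dichotomy
  have hdich : ∀ s, 0 ≤ s → V s = - D s ∨ V s = 0 := by
    intro s hs
    by_cases hi : IntegrableOn (G s) (Ioi 0)
    · left
      have l1 := ((bdy_lim (G s) hi).add (bdy_lim (Q s) (hQint s hs))).abs
      have l2 := le_of_tendsto_of_tendsto' l1 (hlimC (err (f 0 s) (H s)))
        (fun n => hkey s hs ((n:ℝ) + 1) (by have : (0:ℝ) ≤ n := Nat.cast_nonneg n
                                            linarith))
      have l3 := abs_eq_zero.1 (le_antisymm l2 (abs_nonneg _))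
      rw [hVG s hs]
      simp only [hD]
      linarith
    · right
      rw [hVG s hs]
      exact integral_undef hi
  -- lower bound for the dissipation
  set m : ℝ → ℝ → ℝ := fun q s => f q s - f 0 s + f 0 s * ∫ v in (0:ℝ)..q, f v s with hm
  have hlow : ∀ s, 0 ≤ s → ∀ q, 0 ≤ q → ∀ R, q ≤ R → 0 < R →
      (1 - q / R) ^ 2 * (m q s) ^ 2 ≤ ∫ v in (0:ℝ)..R, (1 - v / R) ^ 2 * Q s v := by
    intro s hs q hq R hqR hR
    exact bdy_lower (fun v => f v s) (fun v => fv v s) (f 0 s) (fun v hv => hfv v s hv hs)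
      (fun v hv => (hfvv v s hv hs).continuousAt.continuousWithinAt) (fun v hv => hpos v s hv hs)
      (hint s hs) (hmass s hs) 0 q R le_rfl hq hqR hR
  have hlimq : ∀ q : ℝ, Tendsto (fun n : ℕ => (1 - q / ((n:ℝ) + 1)) ^ 2) atTop (nhds 1) := by
    intro q
    have := (((tendsto_const_nhds (x := (1:ℝ))).sub (hlimC q)).pow 2)
    simpa using this
  have hlarge : ∀ q : ℝ, ∀ᶠ n : ℕ in atTop, q ≤ (n:ℝ) + 1 := by
    intro q
    exact (tendsto_atTop_add_const_right _ (1:ℝ) tendsto_natCast_atTop_atTop).eventually_ge_atTop q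
  have hDm : ∀ s, 0 ≤ s → ∀ q, 0 ≤ q → (m q s) ^ 2 ≤ D s := by
    intro s hs q hq
    have l1 := (hlimq q).mul_const ((m q s) ^ 2)
    rw [one_mul] at l1
    refine le_of_tendsto_of_tendsto l1 (bdy_lim (Q s) (hQint s hs)) ?_
    filter_upwards [hlarge q] with n hn
    exact hlow s hs q hq _ hn (by positivity)
  intro t0 ht0
  refine ⟨?_, hD0 t0 ht0⟩
  rw [(hHd t0 ht0).deriv]
  rcases hdich t0 ht0 with h | hV0
  · exact h
  by_contra hne
  have hDpos : 0 < D t0 := by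
    refine lt_of_le_of_ne (hD0 t0 ht0) (fun h => hne ?_)
    show V t0 = - D t0
    rw [hV0, ← h, neg_zero]
  -- a nonzero flux
  obtain ⟨q, hq, hmq⟩ : ∃ q, 0 ≤ q ∧ m q t0 ≠ 0 := by
    by_contra hcon
    push Not at hcon
    have hcf : ContinuousOn (fun v => f v t0) (Ici 0) := fun v hv =>
      (hfv v t0 hv ht0).continuousAt.continuousWithinAt
    have : D t0 = 0 := by
      apply setIntegral_eq_zero_of_forall_eq_zero
      intro v hv
      have hv : 0 < v := hv
      have hd : HasDerivAt (fun q => m q t0) (fv v t0 + f 0 t0 * f v t0) v := by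
        have h1 : HasDerivAt (fun u => ∫ w in (0:ℝ)..u, f w t0) (f v t0) v := by
          apply intervalIntegral.integral_hasDerivAt_right
          · apply ContinuousOn.intervalIntegrable
            rw [uIcc_of_le hv.le]
            exact hcf.mono (fun w hw => hw.1)
          · exact (hcf.mono Ioi_subset_Ici_self).stronglyMeasurableAtFilter isOpen_Ioi v hv
          · exact (hfv v t0 hv.le ht0).continuousAt
        exact ((hfv v t0 hv.le ht0).sub_const _).add (h1.const_mul _)
      have hd0 : HasDerivAt (fun q => m q t0) 0 v := by
        refine (hasDerivAt_const v (0:ℝ)).congr_of_eventuallyEq ?_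
        filter_upwards [lt_mem_nhds hv] with w hw using hcon w hw.le
      rw [hd.unique hd0]; simp
    linarith
  have hFc := bdy_clamp_cont f hcont
  have hFc1 : ∀ x : ℝ, Continuous (fun s : ℝ => f (max x 0) (max s 0)) := fun x =>
    hFc.comp (f := fun s : ℝ => (x, s)) (by fun_prop)
  have hmc : Continuous (fun s => m q (max s 0)) := by
    have c1 : Continuous (fun s : ℝ => f q (max s 0)) := by
      simpa [max_eq_left hq] using hFc1 q
    have c0 : Continuous (fun s : ℝ => f 0 (max s 0)) := by
      simpa using hFc1 0
    have c2 : Continuous (fun s : ℝ => ∫ v in (0:ℝ)..q, f (max v 0) (max s 0)) := by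
      apply intervalIntegral.continuous_parametric_intervalIntegral_of_continuous'
      exact hFc.comp (f := fun p : ℝ × ℝ => (p.2, p.1)) (by fun_prop)
    have c3 : (fun s : ℝ => ∫ v in (0:ℝ)..q, f (max v 0) (max s 0)) =
        fun s : ℝ => ∫ v in (0:ℝ)..q, f v (max s 0) := by
      funext s
      apply intervalIntegral.integral_congr
      intro v hv
      rw [uIcc_of_le hq] at hv
      simp only [max_eq_left hv.1]
    rw [c3] at c2
    exact (c1.sub c0).add (c0.mul c2)
  set c := (m q t0) ^ 2 / 2 with hc
  have hcpos : 0 < c := by positivity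
  obtain ⟨ε, hε, hball⟩ : ∃ ε > 0, ∀ s, t0 ≤ s → s < t0 + ε → c < (m q s) ^ 2 := by
    have h1 : ∀ᶠ s in nhds t0, c < (m q (max s 0)) ^ 2 := by
      apply (hmc.pow 2).continuousAt.eventually (lt_mem_nhds ?_)
      show c < (m q (max t0 0)) ^ 2
      rw [max_eq_left ht0]
      linarith [hc, hcpos]
    obtain ⟨ε, hε, h2⟩ := Metric.eventually_nhds_iff.1 h1
    refine ⟨ε, hε, fun s h3 h4 => ?_⟩
    have := @h2 s (by rw [Real.dist_eq, abs_lt]; constructor <;> linarith)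
    rwa [max_eq_left (ht0.trans h3)] at this
  -- Darboux
  have hVzero : ∀ s, t0 ≤ s → s < t0 + ε → V s = 0 := by
    have hd := hasDerivWithinAt_forall_lt_or_forall_gt_of_forall_ne (f := H) (f' := V) (convex_Ico t0 (t0 + ε))
      (fun x hx => (hHd x (ht0.trans hx.1)).hasDerivWithinAt) (m := -c / 2) (by
        intro x hx
        have h1 := hball x hx.1 hx.2
        have h2 := hDm x (ht0.trans hx.1) q hq
        rcases hdich x (ht0.trans hx.1) with h | h <;> rw [h] <;> intro h3 <;> linarith)
    rcases hd with hd | hd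
    · have := hd t0 ⟨le_rfl, by linarith⟩
      rw [hV0] at this
      linarith
    · intro s h1 h2
      have h3 := hd s ⟨h1, h2⟩
      have h4 := hball s h1 h2
      have h5 := hDm s (ht0.trans h1) q hq
      rcases hdich s (ht0.trans h1) with h | h
      · rw [h] at h3; linarith
      · exact h
  have hconst : ∀ x y, t0 ≤ x → x < y → y < t0 + ε → H x = H y := by
    intro x y hx hxy hy
    obtain ⟨z, hz, he⟩ := exists_hasDerivAt_eq_slope H V hxy
      (fun z hz => (hHd z (ht0.trans (hx.trans hz.1))).continuousAt.continuousWithinAt)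
      (fun z hz => hHd z (ht0.trans (hx.trans hz.1.le)))
    rw [hVzero z (hx.trans hz.1.le) (hz.2.trans hy), eq_comm, div_eq_zero_iff] at he
    rcases he with he | he <;> linarith
  -- Baire
  set A : ℕ → Set ℝ := fun n => {s | ∀ k : ℕ, ∀ R : ℝ, 0 ≤ R →
    ∫ v in (0:ℝ)..R, |f (max (v + 2 * (1 / ((k:ℝ) + 1))) 0) (max s 0)
      - 2 * f (max (v + 1 / ((k:ℝ) + 1)) 0) (max s 0) + f (max v 0) (max s 0)|
      ≤ (1 / ((k:ℝ) + 1)) ^ 2 * (n:ℝ)} with hA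
  have hAeq : ∀ s, 0 ≤ s → ∀ k : ℕ, ∀ R : ℝ, 0 ≤ R →
      ∫ v in (0:ℝ)..R, |f (max (v + 2 * (1 / ((k:ℝ) + 1))) 0) (max s 0)
      - 2 * f (max (v + 1 / ((k:ℝ) + 1)) 0) (max s 0) + f (max v 0) (max s 0)| =
      ∫ v in (0:ℝ)..R, |f (v + 2 * (1 / ((k:ℝ) + 1))) s
      - 2 * f (v + 1 / ((k:ℝ) + 1)) s + f v s| := by
    intro s hs k R hR
    apply intervalIntegral.integral_congr
    intro v hv
    rw [uIcc_of_le hR] at hv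
    have hk : (0:ℝ) ≤ 1 / ((k:ℝ) + 1) := by positivity
    simp only [max_eq_left hs, max_eq_left hv.1, max_eq_left (add_nonneg hv.1 hk),
      max_eq_left (add_nonneg hv.1 (mul_nonneg (zero_le_two) hk))]
  have hAclosed : ∀ n, IsClosed (A n) := by
    intro n
    simp only [hA, setOf_forall]
    refine isClosed_iInter (fun k => isClosed_iInter (fun R => isClosed_iInter (fun _ => ?_)))
    refine isClosed_le ?_ continuous_const
    apply intervalIntegral.continuous_parametric_intervalIntegral_of_continuous'
    have a1 : Continuous (fun p : ℝ × ℝ => f (max (p.2 + 2 * (1 / ((k:ℝ) + 1))) 0) (max p.1 0)) :=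
      hFc.comp (f := fun p : ℝ × ℝ => (p.2 + 2 * (1 / ((k:ℝ) + 1)), p.1)) (by fun_prop)
    have a2 : Continuous (fun p : ℝ × ℝ => f (max (p.2 + 1 / ((k:ℝ) + 1)) 0) (max p.1 0)) :=
      hFc.comp (f := fun p : ℝ × ℝ => (p.2 + 1 / ((k:ℝ) + 1), p.1)) (by fun_prop)
    have a3 : Continuous (fun p : ℝ × ℝ => f (max p.2 0) (max p.1 0)) :=
      hFc.comp (f := fun p : ℝ × ℝ => (p.2, p.1)) (by fun_prop)
    exact ((a1.sub (continuous_const.mul a2)).add a3).abs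
  have hAcover : ⋃ n, A n = univ := by
    rw [eq_univ_iff_forall]
    intro s
    have hs : 0 ≤ max s 0 := le_max_right _ _
    obtain ⟨n, hn⟩ := exists_nat_ge (∫ v in Ioi (0:ℝ), |fvv v (max s 0)|)
    rw [mem_iUnion]
    refine ⟨n, ?_⟩
    intro k R hR
    have h1 := hAeq (max s 0) hs k R hR
    rw [max_eq_left hs] at h1
    rw [h1]
    refine (bdy_diff2 (fun v => f v (max s 0)) (fun v => fv v (max s 0)) (fun v => fvv v (max s 0))
      (fun v hv => hfv v _ hv hs) (fun v hv => hfvv v _ hv hs) (hint_fvv _ hs) R (1 / ((k:ℝ) + 1)) hR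
      (by positivity)).trans ?_
    gcongr
  have hdense := dense_iUnion_interior_of_closed hAclosed hAcover
  obtain ⟨s0, hs0, hs0'⟩ := hdense.exists_mem_open (isOpen_Ioo (a := t0) (b := t0 + ε)) ⟨t0 + ε / 2, by
    constructor <;> linarith⟩
  rw [mem_iUnion] at hs0
  obtain ⟨n, hn⟩ := hs0
  obtain ⟨δ, hδ, hsub⟩ := Metric.isOpen_iff.1 ((isOpen_Ioo (a := t0) (b := t0 + ε)).inter (isOpen_interior (s := A n)))
    s0 ⟨hs0', hn⟩
  have hJ : ∀ s ∈ Icc s0 (s0 + δ / 2), (t0 < s ∧ s < t0 + ε) ∧ s ∈ A n := by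
    intro s hs
    have := hsub (show s ∈ Metric.ball s0 δ by
      rw [Metric.mem_ball, Real.dist_eq, abs_lt]; constructor <;> linarith [hs.1, hs.2])
    exact ⟨this.1, interior_subset this.2⟩
  set t1 := s0 with ht1
  set t2 := s0 + δ / 2 with ht2
  have h12 : t1 < t2 := by rw [ht2]; linarith
  have ht10 : 0 ≤ t1 := ht0.trans hs0'.1.le
  have hN : ∀ s ∈ Icc t1 t2, ∀ r, 0 ≤ r → ∫ v in (0:ℝ)..r, |fvv v s| ≤ (n:ℝ) := by
    intro s hs r hr
    have hs' : 0 ≤ s := ht10.trans hs.1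
    refine bdy_fatou (fun v => f v s) (fun v => fv v s) (fun v => fvv v s)
      (fun v hv => hfv v _ hv hs') (fun v hv => hfvv v _ hv hs') (hint_fvv _ hs') r n hr (Nat.cast_nonneg n) ?_
    intro k
    have h1 := (hJ s hs).2 k r hr
    rw [hAeq s hs' k r hr] at h1
    exact h1
  have hHc : ∀ s ∈ Icc t1 t2, H s = H t1 := by
    intro s hs
    rcases eq_or_lt_of_le hs.1 with h | h
    · rw [h]
    · exact (hconst t1 s hs0'.1.le h (hJ s hs).1.2).symm
  obtain ⟨C, hC⟩ : ∃ C, ∀ s ∈ Icc t1 t2, err (f 0 s) (H t1) ≤ C := by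
    have c0 : ContinuousOn (fun s : ℝ => f 0 s) (Icc t1 t2) := fun s hs =>
      (hft 0 s le_rfl (ht10.trans hs.1)).continuousAt.continuousWithinAt
    have c1 : ContinuousOn (fun s : ℝ => Real.log (f 0 s)) (Icc t1 t2) :=
      c0.log (fun s hs => (hpos 0 s le_rfl (ht10.trans hs.1)).ne')
    have c2 : ContinuousOn (fun s : ℝ => err (f 0 s) (H t1)) (Icc t1 t2) := by
      simp only [herr]
      fun_prop
    obtain ⟨C, hC⟩ := isCompact_Icc.exists_bound_of_continuousOn c2
    exact ⟨C, fun s hs => (le_abs_self _).trans (hC s hs)⟩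
  have hstep : ∀ᶠ k : ℕ in atTop,
      (∫ v in (0:ℝ)..((k:ℝ) + 1), (1 - v / ((k:ℝ) + 1)) ^ 2 *
        (f v t2 * Real.log (f v t2 / ((1 / μ) * Real.exp (-v / μ)))))
      - (∫ v in (0:ℝ)..((k:ℝ) + 1), (1 - v / ((k:ℝ) + 1)) ^ 2 *
        (f v t1 * Real.log (f v t1 / ((1 / μ) * Real.exp (-v / μ))))) ≤
      (t2 - t1) * (C / ((k:ℝ) + 1) - (1 - q / ((k:ℝ) + 1)) ^ 2 * c) := by
    filter_upwards [hlarge q] with k hk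
    have hk0 : (0:ℝ) ≤ k := Nat.cast_nonneg k
    obtain ⟨i1, e1⟩ := bdy_time μ hμ f ft fv fvv hcont hfvv hft hpos hint_fvv hPDE hBC t1 t2 n ((k:ℝ) + 1)
      ht10 h12.le (by positivity) hN
    rw [← e1]
    have : ∫ s in t1..t2, (C / ((k:ℝ) + 1) - (1 - q / ((k:ℝ) + 1)) ^ 2 * c) =
      (t2 - t1) * (C / ((k:ℝ) + 1) - (1 - q / ((k:ℝ) + 1)) ^ 2 * c) := by
      rw [intervalIntegral.integral_const, smul_eq_mul]
    rw [← this]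
    refine intervalIntegral.integral_mono_on h12.le i1 (by simp) ?_
    intro s hs
    have hs' : 0 ≤ s := ht10.trans hs.1
    have h1 := (abs_le.1 (hkey s hs' ((k:ℝ) + 1) (by linarith))).2
    have h2 := hlow s hs' q hq ((k:ℝ) + 1) hk (by positivity)
    have h3 := (hball s (hJ s hs).1.1.le (hJ s hs).1.2).le
    have h4 : (1 - q / ((k:ℝ) + 1)) ^ 2 * c ≤ (1 - q / ((k:ℝ) + 1)) ^ 2 * (m q s) ^ 2 := by gcongr
    have h5 : err (f 0 s) (H s) / ((k:ℝ) + 1) ≤ C / ((k:ℝ) + 1) := by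
      rw [hHc s hs]
      have := hC s hs
      gcongr
    have h6 : (∫ v in (0:ℝ)..((k:ℝ) + 1), (1 - v / ((k:ℝ) + 1)) ^ 2 * G s v) ≤
      C / ((k:ℝ) + 1) - (1 - q / ((k:ℝ) + 1)) ^ 2 * c := by linarith
    exact h6
  have hlimL := (bdy_lim _ (hlogint t2 (ht10.trans h12.le))).sub (bdy_lim _ (hlogint t1 ht10))
  have hlimR : Tendsto (fun k : ℕ => (t2 - t1) * (C / ((k:ℝ) + 1) - (1 - q / ((k:ℝ) + 1)) ^ 2 * c)) atTop
      (nhds ((t2 - t1) * (0 - 1 * c))) :=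
    (((hlimC C).sub ((hlimq q).mul_const c))).const_mul _
  have hfin : H t2 - H t1 ≤ (t2 - t1) * (0 - 1 * c) := le_of_tendsto_of_tendsto hlimL hlimR hstep
  rw [hHc t2 ⟨h12.le, le_rfl⟩] at hfin
  have : 0 < (t2 - t1) * c := mul_pos (by linarith) hcpos
  linarith
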